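/- Let 𝒞 ⊆ {+1,−1}^𝒳 be a nonempty concept class with VC dimension at most 1, i.e., no two-element subset of 𝒳 is shattered by 𝒞. Then there exists a (3, 1, 1)-good function for (𝒞, 𝒳). -/

import Mathlib

/-! Basic notions for learning with a concept class `C ⊆ {+1,−1}^𝒳`.  Labeled examples are
pairs in `𝒳 × ℤ` (with labels `±1`). -/

variable {X : Type*}

/-- `h` is consistent with a set of labeled examples. -/
def Consistent (h : X → ℤ) (S : Set (X × ℤ)) : Prop := ∀ p ∈ S, h p.1 = p.2

/-- The version space `𝒱(S)` of hypotheses in `C` consistent with `S`. -/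
def VSpace (C : Set (X → ℤ)) (S : Set (X × ℤ)) : Set (X → ℤ) := {h ∈ C | Consistent h S}

/-- The restriction `V_{x→y}`. -/
def Restrict (V : Set (X → ℤ)) (x : X) (y : ℤ) : Set (X → ℤ) := {h ∈ V | h x = y}

/-- A labeled example `(x,y)` is realizable in `V` if `V_{x→y} ≠ ∅`. -/
def RealizableIn (V : Set (X → ℤ)) (x : X) (y : ℤ) : Prop := (Restrict V x y).Nonempty

/-- `V` is a version space for `C`. -/
def IsVersionSpace (C : Set (X → ℤ)) (V : Set (X → ℤ)) : Prop :=
  ∃ S : Set (X × ℤ), V = VSpace C S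

/-- Monotonicity of a score function `f` on size-`k` labeled sets: restricting a version
space consistent with `U` by a labeled example jointly realizable with `U` can only
decrease the score. -/
def MonotoneScore (C : Set (X → ℤ)) (k : ℕ) (f : Finset (X × ℤ) → Set (X → ℤ) → ℝ) : Prop :=
  ∀ U : Finset (X × ℤ), U.card = k → ∀ V : Set (X → ℤ), IsVersionSpace C V →
    (∃ h ∈ V, Consistent h ↑U) →
    ∀ x : X, ∀ y : ℤ, (∃ h ∈ V, Consistent h (insert (x, y) (↑U : Set (X × ℤ)))) →
      f U (Restrict V x y) ≤ f U V

/-- `m`-robustness of a score function `f`: in every size-`m` set `M` labeled by some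
`h ∈ C` there are a size-`k` subset `U ⊆ M` and a witness `p ∈ M ∖ U` such that for every
set `A` of labeled examples labeled by `h` with `A ⊇ M ∖ (U ∪ {p})`, flipping the label of
the witness either drops the score of `U` by at least `1`, or makes `U` unrealizable. -/
def RobustScore [DecidableEq X] (C : Set (X → ℤ)) (m k : ℕ)
    (f : Finset (X × ℤ) → Set (X → ℤ) → ℝ) : Prop :=
  ∀ h ∈ C, ∀ M : Finset (X × ℤ), M.card = m → Consistent h ↑M →
    ∃ U ⊆ M, U.card = k ∧ ∃ p ∈ M, p ∉ U ∧
      ∀ A : Set (X × ℤ), Consistent h A → ↑(M \ insert p U) ⊆ A →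
        (1 ≤ f U (VSpace C A) - f U (Restrict (VSpace C A) p.1 (-p.2)) ∨
          ¬ ∃ h' ∈ Restrict (VSpace C A) p.1 (-p.2), Consistent h' ↑U)

/-- `f` is an `(m,c,k)`-good function for `(C, 𝒳)`: it maps size-`k` labeled sets and
version spaces into `[0, c]`, is monotone, and is `m`-robust. -/
def IsGood [DecidableEq X] (C : Set (X → ℤ)) (m : ℕ) (c : ℝ) (k : ℕ)
    (f : Finset (X × ℤ) → Set (X → ℤ) → ℝ) : Prop :=
  (∀ U : Finset (X × ℤ), U.card = k → ∀ V : Set (X → ℤ), 0 ≤ f U V ∧ f U V ≤ c) ∧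
  MonotoneScore C k f ∧ RobustScore C m k f

/-- The leave-`k`-out potential `ρ_f(S) = Σ_{U ⊆ S, |U| = k} f(U; 𝒱(S ∖ U))`. -/
def pot [DecidableEq X] (C : Set (X → ℤ)) (k : ℕ)
    (f : Finset (X × ℤ) → Set (X → ℤ) → ℝ) (S : Finset (X × ℤ)) : ℝ :=
  ∑ U ∈ S.powersetCard k, f U (VSpace C ↑(S \ U))

open scoped Classical

/-- A finite set `A ⊆ 𝒳` is shattered by `C` if every `±1`-labeling of `A` is realized by
some hypothesis in `C`. -/
def Shatters {X : Type*} (C : Set (X → ℤ)) (A : Finset X) : Prop :=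
  ∀ τ : X → ℤ, (∀ a ∈ A, τ a = 1 ∨ τ a = -1) → ∃ h ∈ C, ∀ a ∈ A, h a = τ a

/-- The tree order relative to a base hypothesis `h0`. -/
def TreeLe {X : Type*} (C : Set (X → ℤ)) (h0 : X → ℤ) (s x : X) : Prop :=
  ∀ h ∈ C, h x ≠ h0 x → h s ≠ h0 s

theorem treeLe_trans {X : Type*} {C : Set (X → ℤ)} {h0 : X → ℤ} {a b c : X}
    (h1 : TreeLe C h0 a b) (h2 : TreeLe C h0 b c) : TreeLe C h0 a c :=
  fun h hh hc => h1 h hh (h2 h hh hc)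

theorem treeLe_chain {X : Type*} {C : Set (X → ℤ)} {h0 : X → ℤ} (hh0 : h0 ∈ C)
    (hpm : ∀ h ∈ C, ∀ x : X, h x = 1 ∨ h x = -1)
    (hVC : ∀ A : Finset X, A.card = 2 → ¬ Shatters C A)
    {h : X → ℤ} (hh : h ∈ C) {s x : X} (hs : h s ≠ h0 s) (hx : h x ≠ h0 x) :
    TreeLe C h0 s x ∨ TreeLe C h0 x s := by
  by_contra hcon
  rw [not_or] at hcon
  obtain ⟨h1, h2⟩ := hcon
  unfold TreeLe at h1 h2
  push Not at h1 h2
  obtain ⟨u, hu, hux, hus⟩ := h1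
  obtain ⟨v, hv, hvs, hvx⟩ := h2
  have hne : s ≠ x := by
    rintro rfl
    exact hux hus
  apply hVC {s, x} (Finset.card_pair hne)
  intro τ hτ
  have t1 := hτ s (by simp)
  have t2 := hτ x (by simp)
  have key : ∀ g ∈ C, g s = τ s → g x = τ x → ∃ h ∈ C, ∀ a ∈ ({s, x} : Finset X), h a = τ a := by
    intro g hg e1 e2
    refine ⟨g, hg, ?_⟩
    intro a ha
    rcases Finset.mem_insert.1 ha with rfl | ha
    · exact e1
    · rw [Finset.mem_singleton.1 ha]; exact e2
  have := hpm h hh s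
  have := hpm h hh x
  have := hpm h0 hh0 s
  have := hpm h0 hh0 x
  have := hpm u hu s
  have := hpm u hu x
  have := hpm v hv s
  have := hpm v hv x
  by_cases e1 : τ s = h0 s <;> by_cases e2 : τ x = h0 x
  · exact key h0 hh0 e1.symm e2.symm
  · exact key u hu (by omega) (by omega)
  · exact key v hv (by omega) (by omega)
  · exact key h hh (by omega) (by omega)

/-- Every nonempty concept class of VC dimension at most `1` (no two-element subset is
shattered) admits a `(3,1,1)`-good function. -/
theorem stmt8 {X : Type*} (C : Set (X → ℤ)) (hne : C.Nonempty)
    (hpm : ∀ h ∈ C, ∀ x : X, h x = 1 ∨ h x = -1)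
    (hVC : ∀ A : Finset X, A.card = 2 → ¬ Shatters C A) :
    ∃ f : Finset (X × ℤ) → Set (X → ℤ) → ℝ, IsGood C 3 1 1 f := by
  obtain ⟨h0, hh0⟩ := hne
  have chain := fun {h : X → ℤ} (hh : h ∈ C) {s x : X} (hs : h s ≠ h0 s) (hx : h x ≠ h0 x) =>
    treeLe_chain hh0 hpm hVC hh hs hx
  let G : Finset (X × ℤ) → Set (X → ℤ) → Prop := fun U V =>
    ∀ s, (∀ h ∈ V, h s ≠ h0 s) → ∀ p ∈ U, TreeLe C h0 s p.1
  refine ⟨fun U V => if G U V then 1 else 0, ?_, ?_, ?_⟩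
  · intro U _ V
    dsimp only
    split_ifs <;> norm_num
  · intro U _ V _ _ x y _
    dsimp only
    have : G U (Restrict V x y) → G U V := fun hG s hs p hp =>
      hG s (fun h hh => hs h hh.1) p hp
    split_ifs with h1 h2
    · exact le_refl _
    · exact absurd (this h1) h2
    · norm_num
    · exact le_refl _
  · intro h hh M hM hcons
    -- it suffices to find a good pair
    have fin : ∀ p ∈ M, ∀ q ∈ M, p ≠ q →
        (∀ A : Set (X × ℤ), Consistent h A → ∀ h' ∈ VSpace C A, h' p.1 = - p.2 → h' q.1 = q.2 →
          G {q} (VSpace C A) ∧ ¬ G {q} (Restrict (VSpace C A) p.1 (-p.2))) →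
        ∃ U ⊆ M, U.card = 1 ∧ ∃ p ∈ M, p ∉ U ∧
          ∀ A : Set (X × ℤ), Consistent h A → ↑(M \ insert p U) ⊆ A →
            (1 ≤ (if G U (VSpace C A) then (1:ℝ) else 0)
                - (if G U (Restrict (VSpace C A) p.1 (-p.2)) then (1:ℝ) else 0) ∨
              ¬ ∃ h' ∈ Restrict (VSpace C A) p.1 (-p.2), Consistent h' ↑U) := by
      intro p hp q hq hpq H
      refine ⟨{q}, by simpa using hq, by simp, p, hp, by simpa using hpq, ?_⟩
      intro A hA _
      by_cases hex : ∃ h' ∈ Restrict (VSpace C A) p.1 (-p.2),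
          Consistent h' ↑({q} : Finset (X × ℤ))
      · left
        obtain ⟨h', hr, hc⟩ := hex
        obtain ⟨g1, g2⟩ := H A hA h' hr.1 hr.2 (hc q (by simp))
        rw [if_pos g1, if_neg g2]
        norm_num
      · right; exact hex
    have key : ∃ p ∈ M, ∃ q ∈ M, p ≠ q ∧ (h p.1 ≠ h0 p.1 ↔ h q.1 ≠ h0 q.1) := by
      obtain ⟨a, b, c, hab, hac, hbc, rfl⟩ := Finset.card_eq_three.1 hM
      by_cases ha : h a.1 ≠ h0 a.1 <;> by_cases hb : h b.1 ≠ h0 b.1 <;>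
        by_cases hc : h c.1 ≠ h0 c.1
      all_goals first
        | exact ⟨a, by simp, b, by simp, hab, by tauto⟩
        | exact ⟨a, by simp, c, by simp, hac, by tauto⟩
        | exact ⟨b, by simp, c, by simp, hbc, by tauto⟩
    obtain ⟨p, hp, q, hq, hpq, hiff⟩ := key
    have ep : h p.1 = p.2 := hcons p hp
    have eq : h q.1 = q.2 := hcons q hq
    by_cases hp1 : h p.1 ≠ h0 p.1
    · have hq1 := hiff.1 hp1
      have one : ∀ p ∈ M, ∀ q ∈ M, h p.1 ≠ h0 p.1 → h q.1 ≠ h0 q.1 → TreeLe C h0 p.1 q.1 →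
          ∀ A : Set (X × ℤ), Consistent h A → ∀ h' ∈ VSpace C A, h' p.1 = - p.2 → h' q.1 = q.2 →
          G {q} (VSpace C A) ∧ ¬ G {q} (Restrict (VSpace C A) p.1 (-p.2)) := by
        intro p hp q hq hp1 hq1 hle A _ h' hh' e1 e2
        exfalso
        have ep : h p.1 = p.2 := hcons p hp
        have eq : h q.1 = q.2 := hcons q hq
        have := hle h' hh'.1 (by rw [e2, ← eq]; exact hq1)
        have := hpm h hh p.1
        have := hpm h0 hh0 p.1
        omega
      rcases chain hh hp1 hq1 with hle | hle
      · exact fin p hp q hq hpq (one p hp q hq hp1 hq1 hle)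
      · exact fin q hq p hp hpq.symm (one q hq p hp hq1 hp1 hle)
    · have hq1 : ¬ h q.1 ≠ h0 q.1 := fun hc => hp1 (hiff.2 hc)
      rw [not_not] at hp1 hq1
      have zero : ∀ p ∈ M, ∀ q ∈ M, h p.1 = h0 p.1 → h q.1 = h0 q.1 →
          (TreeLe C h0 q.1 p.1 ∨ (¬ TreeLe C h0 p.1 q.1 ∧
            ∀ s, h s ≠ h0 s → TreeLe C h0 s p.1 → TreeLe C h0 s q.1)) →
          ∀ A : Set (X × ℤ), Consistent h A → ∀ h' ∈ VSpace C A, h' p.1 = - p.2 → h' q.1 = q.2 →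
          G {q} (VSpace C A) ∧ ¬ G {q} (Restrict (VSpace C A) p.1 (-p.2)) := by
        intro p hp q hq hp1 hq1 hor A hA h' hh' e1 e2
        have ep : h p.1 = p.2 := hcons p hp
        have eq : h q.1 = q.2 := hcons q hq
        have hflip : -p.2 ≠ h0 p.1 := by
          have := hpm h0 hh0 p.1
          omega
        have hd : h' p.1 ≠ h0 p.1 := by rw [e1]; exact hflip
        rcases hor with hle | ⟨hnle, hsub⟩
        · exact absurd (by omega) (hle h' hh'.1 hd)
        · constructor
          · intro s hs r hr
            rw [Finset.mem_singleton.1 hr]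
            have hsh := hs h ⟨hh, hA⟩
            apply hsub s hsh
            rcases chain hh'.1 (hs h' hh') hd with hle | hle
            · exact hle
            · exact absurd hp1 (hle h hh hsh)
          · intro hG
            exact hnle (hG p.1 (fun g hg => by rw [hg.2]; exact hflip) q (by simp))
      by_cases c1 : TreeLe C h0 q.1 p.1
      · exact fin p hp q hq hpq (zero p hp q hq hp1 hq1 (Or.inl c1))
      by_cases c2 : TreeLe C h0 p.1 q.1
      · exact fin q hq p hp hpq.symm (zero q hq p hp hq1 hp1 (Or.inl c2))
      by_cases c3 : ∀ s, h s ≠ h0 s → TreeLe C h0 s p.1 → TreeLe C h0 s q.1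
      · exact fin p hp q hq hpq (zero p hp q hq hp1 hq1 (Or.inr ⟨c2, c3⟩))
      · refine fin q hq p hp hpq.symm (zero q hq p hp hq1 hp1 (Or.inr ⟨c1, ?_⟩))
        intro t ht htq
        push Not at c3
        obtain ⟨s, hs, hsp, hsq⟩ := c3
        rcases chain hh hs ht with hle | hle
        · exact absurd (treeLe_trans hle htq) hsq
        · exact treeLe_trans hle hsp
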